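/- For all integers m ≥ 0 and l ∈ ℤ, one has S_{m+1,l}(q) = q^{−m} S̃_{m,l+1}(q) + S_{m,l}(q) + q^{−m+l−1} S_{m,l−1}(q), an identity in ℤ[q, q⁻¹]. -/

import Mathlib

/-!
The identity holds term by term after two applications of the q-Pascal rules. Expanding
`C(m+1,ν) = C(m,ν) + q^(m+1-ν) C(m,ν-1)` in `S_{m+1,l}`, the terms with `C(m,ν)` are exactly those
of `q^(-m+l-1) S_{m,l-1}`. In the remaining terms shift `ν` to `ν + 1` and expand
`C(ν+1,k) = C(ν,k-1) + q^k C(ν,k)` with `k = m-l-ν`: the two parts are the terms of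
`q^(-m) S̃_{m,l+1}` and of `S_{m,l}`.

The second rule is the recursion defining `qbinom`; the first, dual rule is
`qbinom_succ_succ_dual`. The factor `C(m,ν)` makes all sums finitely supported.
-/

open LaurentPolynomial

/-- The Gaussian (q-)binomial coefficient `C(n,k)_q` as a Laurent polynomial in `q`,
defined by the q-Pascal recursion `C(n+1,k+1)_q = C(n,k)_q + q^(k+1) C(n,k+1)_q`. -/
noncomputable def qbinom : ℕ → ℕ → LaurentPolynomial ℤ
  | _, 0 => 1
  | 0, _ + 1 => 0
  | n + 1, k + 1 => qbinom n k + T ((k : ℤ) + 1) * qbinom n (k + 1)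

/-- `C(n,k)_q` for integer arguments, zero unless `0 ≤ k ≤ n`. -/
noncomputable def qbinomZ (n k : ℤ) : LaurentPolynomial ℤ :=
  if 0 ≤ k ∧ k ≤ n then qbinom n.toNat k.toNat else 0

/-- `S_{m,l}(q) = Σ_{ν∈ℤ} q^{(ν+l−m)(ν+l)+ν(ν−m)} C(m,ν)_q C(ν, m−l−ν)_q`. -/
noncomputable def Sq (m : ℕ) (l : ℤ) : LaurentPolynomial ℤ :=
  ∑ᶠ ν : ℤ,
    T ((ν + l - m) * (ν + l) + ν * (ν - m)) * (qbinomZ m ν * qbinomZ ν (m - l - ν))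

/-- `S̃_{m,l}(q) = Σ_{ν∈ℤ} q^{(ν+l−m)(ν+l−1)+ν(ν−m)} C(m,ν)_q C(ν, m−l−ν)_q`. -/
noncomputable def Sqt (m : ℕ) (l : ℤ) : LaurentPolynomial ℤ :=
  ∑ᶠ ν : ℤ,
    T ((ν + l - m) * (ν + l - 1) + ν * (ν - m)) * (qbinomZ m ν * qbinomZ ν (m - l - ν))

theorem qbinom_zero_right (n : ℕ) : qbinom n 0 = 1 := by
  cases n <;> rfl

theorem qbinom_succ_succ (n k : ℕ) :
    qbinom (n + 1) (k + 1) = qbinom n k + T ((k : ℤ) + 1) * qbinom n (k + 1) := rfl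

theorem qbinom_eq_zero : ∀ {n k : ℕ}, n < k → qbinom n k = 0
  | _, 0, h => by omega
  | 0, _ + 1, _ => rfl
  | n + 1, k + 1, h => by
    rw [qbinom_succ_succ, qbinom_eq_zero (by omega : n < k),
      qbinom_eq_zero (by omega : n < k + 1)]
    simp

/-- The dual q-Pascal rule. For `k > n` the exponent `n - k` is negative, but both sides vanish. -/
theorem qbinom_succ_succ_dual (n k : ℕ) :
    qbinom (n + 1) (k + 1) = qbinom n (k + 1) + T ((n : ℤ) - k) * qbinom n k := by
  induction n generalizing k with
  | zero =>
    cases k with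
    | zero => simp [qbinom]
    | succ k => simp [qbinom]
  | succ n ih =>
    cases k with
    | zero =>
      have hA := qbinom_succ_succ (n + 1) 0
      have hB := ih 0
      have hC := qbinom_succ_succ n 0
      rw [qbinom_zero_right] at hA hB hC
      rw [qbinom_zero_right]
      have h : (T ((n + 1 : ℕ) - (0 : ℕ) : ℤ) : LaurentPolynomial ℤ)
          = T (((0 : ℕ) : ℤ) + 1) * T ((n : ℤ) - (0 : ℕ)) := by
        rw [← T_add]; congr 1; push_cast; ring
      linear_combination hA + T (((0 : ℕ) : ℤ) + 1) * hB - hC - h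
    | succ k =>
      have hk : (T ((n + 1 : ℕ) - (k + 1 : ℕ) : ℤ) : LaurentPolynomial ℤ)
          = T ((n : ℤ) - k) := by
        congr 1; push_cast; ring
      have h : (T (((k + 1 : ℕ) : ℤ) + 1) * T ((n : ℤ) - (k + 1 : ℕ)) : LaurentPolynomial ℤ)
          = T ((n : ℤ) - k) * T ((k : ℤ) + 1) := by
        rw [← T_add, ← T_add]; congr 1; push_cast; ring
      rw [hk]
      -- Expand `C(n+2,k+2)` by the defining rule, then compare both expansions of `C(n+1,k+1)`
      -- and of `C(n+1,k+2)`.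
      linear_combination qbinom_succ_succ (n + 1) (k + 1) + ih k
        + T (((k + 1 : ℕ) : ℤ) + 1) * ih (k + 1) - qbinom_succ_succ n (k + 1)
        - T ((n : ℤ) - k) * qbinom_succ_succ n k + qbinom n (k + 1) * h

theorem qbinomZ_natCast (n k : ℕ) : qbinomZ n k = qbinom n k := by
  unfold qbinomZ
  split_ifs with h
  · simp
  · rw [qbinom_eq_zero (by omega)]

theorem qbinomZ_of_neg {n k : ℤ} (h : k < 0) : qbinomZ n k = 0 :=
  if_neg (by omega)

theorem qbinomZ_succ (n : ℕ) (k : ℤ) :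
    qbinomZ (n + 1) k = qbinomZ n (k - 1) + T k * qbinomZ n k := by
  rcases lt_or_ge k 0 with hk | hk
  · rw [qbinomZ_of_neg hk, qbinomZ_of_neg hk, qbinomZ_of_neg (by omega)]; simp
  obtain ⟨k, rfl⟩ := Int.eq_ofNat_of_zero_le hk
  rw [← Nat.cast_succ]
  cases k with
  | zero =>
    rw [qbinomZ_natCast, qbinomZ_natCast, qbinomZ_of_neg (by simp)]
    simp [qbinom_zero_right]
  | succ k =>
    have h : (((k + 1 : ℕ) : ℤ) - 1) = (k : ℕ) := by push_cast; ring
    rw [h, qbinomZ_natCast, qbinomZ_natCast, qbinomZ_natCast, qbinom_succ_succ]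
    push_cast; rfl

theorem qbinomZ_succ_dual (n : ℕ) (k : ℤ) :
    qbinomZ (n + 1) k = qbinomZ n k + T ((n : ℤ) + 1 - k) * qbinomZ n (k - 1) := by
  rcases lt_or_ge k 0 with hk | hk
  · rw [qbinomZ_of_neg hk, qbinomZ_of_neg hk, qbinomZ_of_neg (by omega)]; simp
  obtain ⟨k, rfl⟩ := Int.eq_ofNat_of_zero_le hk
  rw [← Nat.cast_succ]
  cases k with
  | zero =>
    rw [qbinomZ_natCast, qbinomZ_natCast, qbinomZ_of_neg (by simp)]
    simp [qbinom_zero_right]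
  | succ k =>
    have h : (((k + 1 : ℕ) : ℤ) - 1) = (k : ℕ) := by push_cast; ring
    have h' : ((n.succ : ℕ) : ℤ) - ((k + 1 : ℕ) : ℤ) = n - k := by push_cast; ring
    rw [h, h', qbinomZ_natCast, qbinomZ_natCast, qbinomZ_natCast, qbinom_succ_succ_dual]

theorem finite_support_qbinomZ_mul (m : ℕ) (a b : ℤ → LaurentPolynomial ℤ) :
    (Function.support fun ν : ℤ => a ν * (qbinomZ m ν * b ν)).Finite := by
  refine (Set.finite_Icc (0 : ℤ) m).subset fun ν hν => ?_
  by_contra hc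
  apply hν
  have h : qbinomZ m ν = 0 := if_neg hc
  simp [h]

theorem mul_finsum_qbinomZ_mul (m : ℕ) (c : LaurentPolynomial ℤ) (a b : ℤ → LaurentPolynomial ℤ) :
    c * ∑ᶠ ν : ℤ, a ν * (qbinomZ m ν * b ν) = ∑ᶠ ν : ℤ, (c * a ν) * (qbinomZ m ν * b ν) := by
  rw [mul_finsum' _ _ (finite_support_qbinomZ_mul m a b)]
  exact finsum_congr fun ν => (mul_assoc _ _ _).symm

/-- The defining q-Pascal rule with top index `ν + 1`, valid for all integers `ν` once multiplied
by `C(m,ν)`, which vanishes for `ν < 0`. -/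
theorem qbinomZ_mul_succ (m ν k : ℤ) :
    qbinomZ m ν * qbinomZ (ν + 1) k
      = qbinomZ m ν * qbinomZ ν (k - 1) + T k * (qbinomZ m ν * qbinomZ ν k) := by
  rcases lt_or_ge ν 0 with hν | hν
  · simp [qbinomZ_of_neg hν]
  obtain ⟨n, rfl⟩ := Int.eq_ofNat_of_zero_le hν
  rw [qbinomZ_succ]; ring

/-- S_{m+1,l} = q^{-m} St_{m,l+1} + S_{m,l} + q^{-m+l-1} S_{m,l-1}. -/
theorem S_succ_rec3 (m : ℕ) (l : ℤ) :
    Sq (m + 1) l =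
      T (-(m : ℤ)) * Sqt m (l + 1) + Sq m l + T (-(m : ℤ) + l - 1) * Sq m (l - 1) := by
  have hsplit : Sq (m + 1) l =
      (∑ᶠ ν : ℤ, T ((ν + l - (m + 1)) * (ν + l) + ν * (ν - (m + 1))) *
        (qbinomZ m ν * qbinomZ ν (m + 1 - l - ν))) +
      ∑ᶠ ν : ℤ, T ((ν + 1 + l - (m + 1)) * (ν + 1 + l) + (ν + 1) * (ν + 1 - (m + 1)) + (m - ν)) *
        (qbinomZ m ν * qbinomZ (ν + 1) (m - l - ν)) := by
    -- Undo the shift `ν ↦ ν + 1` in the second sum.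
    have hshift := finsum_comp_equiv (Equiv.addRight (-1 : ℤ)) (f := fun ν : ℤ =>
      T ((ν + 1 + l - (m + 1)) * (ν + 1 + l) + (ν + 1) * (ν + 1 - (m + 1)) + (m - ν)) *
        (qbinomZ m ν * qbinomZ (ν + 1) (m - l - ν)))
    rw [← hshift]
    refine Eq.trans (finsum_congr fun ν => ?_) (finsum_add_distrib
      (finite_support_qbinomZ_mul m _ _)
      ((finite_support_qbinomZ_mul m
        (fun ν => T ((ν + 1 + l - (m + 1)) * (ν + 1 + l) + (ν + 1) * (ν + 1 - (m + 1)) + (m - ν)))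
        (fun ν => qbinomZ (ν + 1) (m - l - ν))).preimage
          (Equiv.addRight (-1 : ℤ)).injective.injOn))
    have e1 : ν + -1 + 1 = ν := by ring
    have e2 : (m : ℤ) - l - (ν + -1) = m + 1 - l - ν := by ring
    have e3 : (m : ℤ) - (ν + -1) = m + 1 - ν := by ring
    simp only [Equiv.coe_addRight, e1, e2, e3, Nat.cast_add, Nat.cast_one, T_add _ ((m : ℤ) + 1 - ν)]
    rw [qbinomZ_succ_dual, ← sub_eq_add_neg]
    ring
  rw [hsplit, add_comm]
  unfold Sq Sqt
  rw [mul_finsum_qbinomZ_mul, mul_finsum_qbinomZ_mul]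
  congr 1
  · refine Eq.trans (finsum_congr fun ν => ?_) (finsum_add_distrib
      (finite_support_qbinomZ_mul m _ _) (finite_support_qbinomZ_mul m _ _))
    have e : (m : ℤ) - (l + 1) - ν = m - l - ν - 1 := by ring
    rw [qbinomZ_mul_succ, mul_add, ← mul_assoc (T _) (T _), ← T_add, ← T_add, e]
    congr 3 <;> ring
  · refine finsum_congr fun ν => ?_
    have e : (m : ℤ) - (l - 1) - ν = m + 1 - l - ν := by ring
    rw [← T_add, e]
    congr 2; ring
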